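/- Let h ≥ 2 and 𝔭 a fixed prime element. Under the counting axiom, the number of h-free elements m with N(m) ≤ x and n_𝔭(m) ≥ 1 equals ((N(𝔭)^{h−1} − 1)/(N(𝔭)^h − 1)) · (κ/ζ_M(h)) x + O_h((x/N(𝔭))^τ) for some τ < 1 independent of 𝔭. -/

import Mathlib

/-! The proof is inclusion-exclusion followed by termwise use of the counting axiom.

Fix caps `a : P → ℕ` with all `a q ≥ 1`, and let `A(y)` count the `m` with `N(m) ≤ y` and
`m q < a q` for every `q`. Expanding the condition by inclusion-exclusion over the finite sets `S`
of primes at which the cap is violated, and dividing by the element `∏_{q ∈ S} q ^ a q`, gives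
`A(y) = ∑_S (-1)^|S| T(y / ∏_{q ∈ S} N(q)^(a q))`, where `T` is the counting function of the whole
monoid (`hasSum_cappedCount`). For `τ` with `max θ (3/4) ≤ τ < 1` one has `|T(y) - κ y| ≤ C' y^τ` for
*every* `y > 0` (`abs_normCount_sub_le`), so the sum of the main terms is
`κ y ∏_q (1 - N(q)^(-a q))` and the error is at most
`C' y^τ ∏_q (1 + N(q)^(-τ a q))` (`abs_cappedCount_sub_le`). If `a q = h` for all `q` but one, the
error product is bounded independently of the exceptional prime, because `τ h ≥ 3/2` and
`∑_q N(q)^(-3/2)` converges; the latter follows from `T(y) = O(y)` by cutting into dyadic blocks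
(`summable_norm_rpow`).

Dividing by `𝔭`, the elements to be counted correspond to the `m` with `N(m) ≤ x / N(𝔭)` and
`m q < a q`, where `a 𝔭 = h - 1` and `a q = h` otherwise. Since the estimate for `A` holds for all
positive arguments, the error is `O((x / N(𝔭))^τ)` even when `x < N(𝔭)`, and comparing one Euler
factor with the product for `ζ_M(h)` gives the stated density. -/

open Filter

/-- The norm of an element of the free abelian monoid on `P`. -/
def mnorm {P : Type*} (N : P → ℕ) (m : P →₀ ℕ) : ℕ :=
  m.prod fun p k => N p ^ k

/-! ### Counting functions -/

section CappedCount

variable {P : Type*} (N : P → ℕ)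

/-- The number of elements of the monoid of norm at most `x`. -/
noncomputable def normCount (x : ℝ) : ℕ := {m : P →₀ ℕ | (mnorm N m : ℝ) ≤ x}.ncard

/-- The number of elements `m` of norm at most `x` whose multiplicity at each prime `q` is less than
the cap `a q`. The `h`-free elements are those for `a = h`. -/
noncomputable def cappedCount (a : P → ℕ) (x : ℝ) : ℕ :=
  {m : P →₀ ℕ | (∀ q, m q < a q) ∧ (mnorm N m : ℝ) ≤ x}.ncard

variable {N}

lemma mnorm_add (m n : P →₀ ℕ) : mnorm N (m + n) = mnorm N m * mnorm N n :=
  Finsupp.prod_add_index' (by simp) (fun a b c => pow_add _ _ _)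

lemma mnorm_single (p : P) (k : ℕ) : mnorm N (Finsupp.single p k) = N p ^ k := by
  simp [mnorm]

lemma mnorm_pos (hN : ∀ p, 1 < N p) (m : P →₀ ℕ) : 0 < mnorm N m :=
  Finset.prod_pos fun p _ => pow_pos (by have := hN p; omega) _

lemma normCount_eq_zero (hN : ∀ p, 1 < N p) {x : ℝ} (hx : x < 1) : normCount N x = 0 := by
  have : {m : P →₀ ℕ | (mnorm N m : ℝ) ≤ x} = ∅ := by
    ext m
    have h1 : (1 : ℝ) ≤ mnorm N m := by exact_mod_cast mnorm_pos hN m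
    simp only [Set.mem_ofPred_eq, Set.mem_empty_iff_false, iff_false, not_le]
    linarith
  simp [normCount, this]

/-- Multiples of `s` of norm at most `x` correspond, on dividing by `s`, to elements of norm at most
`x / N(s)`; a further condition `Q` is carried along. -/
lemma ncard_multiples (hN : ∀ p, 1 < N p) (s : P →₀ ℕ) (Q : (P →₀ ℕ) → Prop) (x : ℝ) :
    {m : P →₀ ℕ | s ≤ m ∧ Q m ∧ (mnorm N m : ℝ) ≤ x}.ncard
      = {m : P →₀ ℕ | Q (m + s) ∧ (mnorm N m : ℝ) ≤ x / mnorm N s}.ncard := by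
  refine Eq.trans ?_ (Set.ncard_image_of_injective _ (add_left_injective s))
  congr 1
  have hs : (0 : ℝ) < mnorm N s := by exact_mod_cast mnorm_pos hN s
  ext m
  simp only [Set.mem_ofPred_eq, Set.mem_image]
  constructor
  · rintro ⟨h1, h2, h3⟩
    refine ⟨m - s, ⟨?_, ?_⟩, tsub_add_cancel_of_le h1⟩
    · rwa [tsub_add_cancel_of_le h1]
    · rw [le_div_iff₀ hs]
      rw [← tsub_add_cancel_of_le h1, mnorm_add] at h3
      exact_mod_cast h3
  · rintro ⟨n, ⟨h1, h2⟩, rfl⟩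
    refine ⟨le_add_self, h1, ?_⟩
    rw [le_div_iff₀ hs] at h2
    rw [mnorm_add]
    exact_mod_cast h2

lemma finite_of_counting (hfin : ∀ x : ℝ, 1 ≤ x → {m : P →₀ ℕ | (mnorm N m : ℝ) ≤ x}.Finite)
    (x : ℝ) : {m : P →₀ ℕ | (mnorm N m : ℝ) ≤ x}.Finite :=
  (hfin (max x 1) (le_max_right _ _)).subset fun m (hm : (mnorm N m : ℝ) ≤ x) =>
    hm.trans (le_max_left x 1)

/-- The counting axiom extends to all `x > 0` with any exponent `τ ∈ [θ, 1]`: for `x < 1` there is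
nothing to count and `κ x ≤ κ x ^ τ`. -/
lemma abs_normCount_sub_le (hN : ∀ p, 1 < N p) {κ θ C τ : ℝ} (hκ : 0 < κ)
    (hcount : ∀ x : ℝ, 1 ≤ x → |(normCount N x : ℝ) - κ * x| ≤ C * x ^ θ)
    (hθτ : θ ≤ τ) (hτ : τ ≤ 1) {x : ℝ} (hx : 0 < x) :
    |(normCount N x : ℝ) - κ * x| ≤ (|C| + κ) * x ^ τ := by
  have hp : 0 < x ^ τ := Real.rpow_pos_of_pos hx _
  rcases lt_or_ge x 1 with h1 | h1
  · rw [normCount_eq_zero hN h1]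
    have h2 : x ^ (1 : ℝ) ≤ x ^ τ := Real.rpow_le_rpow_of_exponent_ge hx h1.le hτ
    rw [Real.rpow_one] at h2
    have h3 : 0 < κ * x := by positivity
    rw [Nat.cast_zero, zero_sub, abs_neg, abs_of_pos h3]
    nlinarith [abs_nonneg C]
  · have h2 : x ^ θ ≤ x ^ τ := Real.rpow_le_rpow_of_exponent_le h1 hθτ
    have h3 : 0 < x ^ θ := Real.rpow_pos_of_pos hx _
    calc _ ≤ C * x ^ θ := hcount x h1
      _ ≤ |C| * x ^ θ := by gcongr; exact le_abs_self C
      _ ≤ |C| * x ^ τ := by gcongr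
      _ ≤ _ := by nlinarith

/-! ### Inclusion-exclusion -/

/-- Inclusion-exclusion for `cappedCount`. Only finitely many terms of the sum are nonzero. -/
lemma hasSum_cappedCount (hN : ∀ p, 1 < N p)
    (hfin : ∀ x : ℝ, {m : P →₀ ℕ | (mnorm N m : ℝ) ≤ x}.Finite)
    {a : P → ℕ} (ha : ∀ q, 1 ≤ a q) (x : ℝ) :
    HasSum (fun S : Finset P => (-1 : ℝ) ^ S.card * normCount N (x / ∏ q ∈ S, (N q : ℝ) ^ a q))
      (cappedCount N a x) := by
  classical
  set F := (hfin x).toFinset with hF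
  have memF : ∀ m, m ∈ F ↔ (mnorm N m : ℝ) ≤ x := by simp [hF]
  -- the primes at which `m` violates the cap
  let bad : (P →₀ ℕ) → Finset P := fun m => m.support.filter fun q => a q ≤ m q
  have mem_bad : ∀ m q, q ∈ bad m ↔ a q ≤ m q := by
    intro m q
    simp only [bad, Finset.mem_filter, Finsupp.mem_support_iff, and_iff_right_iff_imp]
    have := ha q
    omega
  -- each term counts the elements violating the cap on all of `S`
  have key : ∀ S : Finset P, normCount N (x / ∏ q ∈ S, (N q : ℝ) ^ a q)
      = (F.filter fun m => S ⊆ bad m).card := by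
    intro S
    have hs : mnorm N (Finsupp.indicator S fun q _ => a q) = ∏ q ∈ S, N q ^ a q :=
      Finsupp.prod_indicator_index _ (by simp)
    have := ncard_multiples hN (Finsupp.indicator S fun q _ => a q) (fun _ => True) x
    rw [hs] at this
    simp only [true_and] at this
    push_cast at this
    rw [normCount, ← this, ← Set.ncard_coe_finset]
    congr 1
    ext m
    simp only [Set.mem_ofPred_eq, Finset.coe_filter, memF, Finset.subset_iff, mem_bad]
    rw [and_comm]
    refine and_congr_right fun _ => ?_
    rw [Finsupp.le_def]
    refine forall_congr' fun q => ?_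
    by_cases hq : q ∈ S <;> simp [Finsupp.indicator_apply, hq]
  set U := F.biUnion bad with hU
  have hsum : (cappedCount N a x : ℝ)
      = ∑ S ∈ U.powerset, (-1 : ℝ) ^ S.card * normCount N (x / ∏ q ∈ S, (N q : ℝ) ^ a q) := by
    have h1 : cappedCount N a x = (F.filter fun m => bad m = ∅).card := by
      rw [cappedCount, ← Set.ncard_coe_finset]
      congr 1
      ext m
      simp only [Set.mem_ofPred_eq, Finset.coe_filter, memF, Finset.eq_empty_iff_forall_notMem,
        mem_bad, not_le]
      exact and_comm
    have h2 : ∀ m ∈ F, (∑ S ∈ U.powerset, if S ⊆ bad m then (-1 : ℝ) ^ S.card else 0)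
        = if bad m = ∅ then 1 else 0 := by
      intro m hm
      have hsub : bad m ⊆ U := Finset.subset_biUnion_of_mem bad hm
      have h3 : U.powerset.filter (fun S => S ⊆ bad m) = (bad m).powerset := by
        ext S
        simp only [Finset.mem_filter, Finset.mem_powerset]
        exact ⟨fun h => h.2, fun h => ⟨h.trans hsub, h⟩⟩
      rw [← Finset.sum_filter, h3]
      have h4 := @Finset.sum_powerset_neg_one_pow_card P _ (bad m)
      exact_mod_cast h4
    rw [h1, Finset.card_filter, Nat.cast_sum]
    simp only [Nat.cast_ite, Nat.cast_one, Nat.cast_zero]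
    rw [← Finset.sum_congr rfl h2, Finset.sum_comm]
    refine Finset.sum_congr rfl fun S _ => ?_
    rw [key, Finset.card_filter, Nat.cast_sum, Finset.mul_sum]
    refine Finset.sum_congr rfl fun m _ => ?_
    split_ifs <;> simp
  rw [hsum]
  refine hasSum_sum_of_ne_finset_zero fun S hS => ?_
  rw [key]
  have : F.filter (fun m => S ⊆ bad m) = ∅ := by
    rw [Finset.filter_eq_empty_iff]
    intro m hm hS'
    exact hS (Finset.mem_powerset.2 (hS'.trans (Finset.subset_biUnion_of_mem bad hm)))
  simp [this]

/-! ### Asymptotics for bounded multiplicities -/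

/-- Expansion of `∏ (1 + g)` for nonnegative summable `g`, with the bound `exp (∑ g)`. -/
lemma sum_finset_prod_le {g : P → ℝ} (hg : ∀ q, 0 ≤ g q) {B : ℝ}
    (hB : ∀ U : Finset P, ∑ q ∈ U, g q ≤ B) :
    Summable (fun S : Finset P => ∏ q ∈ S, g q) ∧
      ∑' S : Finset P, ∏ q ∈ S, g q ≤ Real.exp B := by
  classical
  have h0 : (0 : Finset P → ℝ) ≤ fun S : Finset P => ∏ q ∈ S, g q :=
    fun S => Finset.prod_nonneg fun q _ => hg q
  have h1 : ∀ V : Finset (Finset P), ∑ S ∈ V, ∏ q ∈ S, g q ≤ Real.exp B := by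
    intro V
    have hV : V ⊆ (V.sup id).powerset := fun S hS =>
      Finset.mem_powerset.2 (Finset.le_sup (f := id) hS)
    calc ∑ S ∈ V, ∏ q ∈ S, g q ≤ ∑ S ∈ (V.sup id).powerset, ∏ q ∈ S, g q :=
          Finset.sum_le_sum_of_subset_of_nonneg hV fun S _ _ => h0 S
      _ = ∏ q ∈ V.sup id, (1 + g q) := (Finset.prod_one_add _).symm
      _ ≤ ∏ q ∈ V.sup id, Real.exp (g q) := by
          refine Finset.prod_le_prod (fun q _ => by linarith [hg q]) fun q _ => ?_
          linarith [Real.add_one_le_exp (g q)]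
      _ = Real.exp (∑ q ∈ V.sup id, g q) := (Real.exp_sum _ _).symm
      _ ≤ _ := Real.exp_le_exp.2 (hB _)
  exact ⟨summable_of_sum_le h0 h1, Real.tsum_le_of_sum_le h0 h1⟩

/-- The count with caps `a` has density `κ ∏ (1 - N(q)^(-a q))`, with an error controlled by
`∑ N(q)^(-τ a q)`, for all positive arguments. -/
lemma abs_cappedCount_sub_le (hN : ∀ p, 1 < N p)
    (hfin : ∀ x : ℝ, {m : P →₀ ℕ | (mnorm N m : ℝ) ≤ x}.Finite)
    {κ K τ B : ℝ} (hK : 0 ≤ K) (hτ : τ ≤ 1)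
    (hT : ∀ x : ℝ, 0 < x → |(normCount N x : ℝ) - κ * x| ≤ K * x ^ τ)
    {a : P → ℕ} (ha : ∀ q, 1 ≤ a q)
    (hB : ∀ U : Finset P, ∑ q ∈ U, ((N q : ℝ) ^ a q) ^ (-τ) ≤ B) :
    ∃ L : ℝ, HasProd (fun q => 1 - ((N q : ℝ) ^ a q)⁻¹) L ∧
      ∀ y : ℝ, 0 < y → |(cappedCount N a y : ℝ) - κ * L * y| ≤ K * Real.exp B * y ^ τ := by
  have hw1 : ∀ q, (1 : ℝ) ≤ (N q : ℝ) ^ a q := fun q =>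
    one_le_pow₀ (by exact_mod_cast (hN q).le)
  have hw0 : ∀ q, (0 : ℝ) < (N q : ℝ) ^ a q := fun q => lt_of_lt_of_le one_pos (hw1 q)
  have hg0 : ∀ q, 0 ≤ ((N q : ℝ) ^ a q) ^ (-τ) := fun q => Real.rpow_nonneg (hw0 q).le _
  obtain ⟨hs, hle⟩ := sum_finset_prod_le hg0 hB
  -- the main terms are dominated by the error terms, since `τ ≤ 1`
  have hs' : Summable fun S : Finset P => ∏ q ∈ S, (-((N q : ℝ) ^ a q)⁻¹) := by
    refine Summable.of_norm_bounded hs fun S => ?_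
    rw [norm_prod]
    refine Finset.prod_le_prod (fun _ _ => norm_nonneg _) fun q _ => ?_
    rw [norm_neg, norm_inv, Real.norm_of_nonneg (hw0 q).le, ← Real.rpow_neg_one]
    exact Real.rpow_le_rpow_of_exponent_le (hw1 q) (by linarith)
  obtain ⟨L, hL⟩ := hs'
  refine ⟨L, by simpa [sub_eq_add_neg] using hasProd_one_add_of_hasSum_prod hL, fun y hy => ?_⟩
  have h1 := (hasSum_cappedCount hN hfin ha y).sub (hL.mul_left (κ * y))
  have h2 : κ * L * y = κ * y * L := by ring
  rw [h2, ← Real.norm_eq_abs]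
  refine (h1.norm_le_of_bounded (hs.hasSum.mul_left (K * y ^ τ)) fun S => ?_).trans ?_
  · have hW : (0 : ℝ) < ∏ q ∈ S, (N q : ℝ) ^ a q := Finset.prod_pos fun q _ => hw0 q
    have e1 : ∏ q ∈ S, (-((N q : ℝ) ^ a q)⁻¹)
        = (-1) ^ S.card * (∏ q ∈ S, (N q : ℝ) ^ a q)⁻¹ := by
      rw [Finset.prod_neg, Finset.prod_inv_distrib]
    have e2 : ∏ q ∈ S, ((N q : ℝ) ^ a q) ^ (-τ) = (∏ q ∈ S, (N q : ℝ) ^ a q) ^ (-τ) :=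
      Real.finsetProd_rpow _ _ (fun q _ => (hw0 q).le) _
    rw [e1, e2]
    set W := ∏ q ∈ S, (N q : ℝ) ^ a q
    have e3 : (-1 : ℝ) ^ S.card * (normCount N (y / W) : ℝ) - κ * y * ((-1) ^ S.card * W⁻¹)
        = (-1) ^ S.card * (normCount N (y / W) - κ * (y / W)) := by
      rw [div_eq_mul_inv]; ring
    rw [e3, norm_mul, norm_pow, norm_neg, norm_one, one_pow, one_mul, Real.norm_eq_abs]
    refine (hT _ (div_pos hy hW)).trans_eq ?_
    rw [Real.div_rpow hy.le hW.le, Real.rpow_neg hW.le, div_eq_mul_inv, mul_assoc]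
  · have : 0 ≤ K * y ^ τ := mul_nonneg hK (Real.rpow_nonneg hy.le _)
    nlinarith

/-! ### Convergence over the primes -/

/-- If the number of elements of norm at most `x` is `O(x)`, then `∑ N(q)^(-3/2)` over the primes
converges: the block `2^k ≤ N(q) < 2^(k+1)` contributes `O(2^(-k/2))`. -/
lemma summable_norm_rpow (hN : ∀ p, 1 < N p)
    (hfin : ∀ x : ℝ, {m : P →₀ ℕ | (mnorm N m : ℝ) ≤ x}.Finite)
    {A : ℝ} (hA : ∀ x : ℝ, 1 ≤ x → (normCount N x : ℝ) ≤ A * x) :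
    Summable fun q => (N q : ℝ) ^ (-(3 / 2) : ℝ) := by
  classical
  have hN0 : ∀ q, (0 : ℝ) < N q := fun q => by exact_mod_cast (zero_lt_one.trans (hN q))
  have hA0 : 0 ≤ A := by simpa using (Nat.cast_nonneg _).trans (hA 1 le_rfl)
  set r : ℝ := (2 : ℝ) ^ (-(1 / 2) : ℝ) with hr
  have hr0 : 0 < r := Real.rpow_pos_of_pos two_pos _
  have hr1 : r < 1 := Real.rpow_lt_one_of_one_lt_of_neg one_lt_two (by norm_num)
  have hgeo := (summable_geometric_of_lt_one hr0.le hr1).mul_left (2 * A)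
  refine summable_of_sum_le (c := ∑' k : ℕ, 2 * A * r ^ k)
    (fun q => Real.rpow_nonneg (hN0 q).le _) fun U => ?_
  rw [← Finset.sum_fiberwise_of_maps_to (g := fun q => Nat.log 2 (N q))
    (t := U.image fun q => Nat.log 2 (N q)) (fun q hq => Finset.mem_image_of_mem _ hq)]
  refine le_trans (Finset.sum_le_sum fun k _ => ?_)
    (hgeo.sum_le_tsum _ fun k _ => by positivity)
  set V := U.filter fun q => Nat.log 2 (N q) = k with hV
  have hmem : ∀ q ∈ V, 2 ^ k ≤ N q ∧ N q < 2 ^ (k + 1) := by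
    intro q hq
    obtain ⟨-, rfl⟩ := Finset.mem_filter.1 hq
    exact ⟨Nat.pow_log_le_self 2 (by have := hN q; omega),
      Nat.lt_pow_succ_log_self one_lt_two _⟩
  have hcard : (V.card : ℝ) ≤ A * 2 ^ (k + 1) := by
    refine le_trans ?_ (hA (2 ^ (k + 1)) (one_le_pow₀ one_le_two))
    have hinj : Function.Injective fun q : P => Finsupp.single q (1 : ℕ) :=
      Finsupp.single_left_injective one_ne_zero
    rw [← Finset.card_image_of_injective V hinj, ← Set.ncard_coe_finset]
    refine Nat.cast_le.2 (Set.ncard_le_ncard ?_ (hfin _))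
    intro m hm
    obtain ⟨q, hq, rfl⟩ := Finset.mem_image.1 (Finset.mem_coe.1 hm)
    simp only [Set.mem_ofPred_eq, mnorm_single, pow_one]
    exact_mod_cast (hmem q hq).2.le
  have hterm : ∀ q ∈ V, (N q : ℝ) ^ (-(3 / 2) : ℝ) ≤ ((2 : ℝ) ^ k) ^ (-(3 / 2) : ℝ) := by
    intro q hq
    refine Real.rpow_le_rpow_of_nonpos (by positivity) ?_ (by norm_num)
    exact_mod_cast (hmem q hq).1
  have hblock : (2 : ℝ) ^ k * ((2 : ℝ) ^ k) ^ (-(3 / 2) : ℝ) = r ^ k := by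
    have h2 : (0 : ℝ) < 2 ^ k := by positivity
    rw [← Real.rpow_one_add' h2.le (by norm_num), hr, ← Real.rpow_natCast, ← Real.rpow_natCast,
      ← Real.rpow_mul two_pos.le, ← Real.rpow_mul two_pos.le]
    congr 1
    ring
  calc ∑ q ∈ V, (N q : ℝ) ^ (-(3 / 2) : ℝ)
      ≤ V.card • ((2 : ℝ) ^ k) ^ (-(3 / 2) : ℝ) := Finset.sum_le_card_nsmul _ _ _ hterm
    _ ≤ A * 2 ^ (k + 1) * ((2 : ℝ) ^ k) ^ (-(3 / 2) : ℝ) := by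
        rw [nsmul_eq_mul]; gcongr
    _ = 2 * A * r ^ k := by rw [← hblock]; ring

/-- Over the reals the Euler product with inverted factors converges to the inverse: both products
converge, and their termwise product is `1`. In particular the limit is nonzero. -/
lemma mul_tprod_inv_eq_one {u : P → ℝ} (hu0 : ∀ q, 0 ≤ u q) (hu : ∀ q, u q ≤ 1 / 2)
    (hs : Summable u) {L : ℝ} (hL : HasProd (fun q => 1 - u q) L) :
    L * ∏' q, (1 - u q)⁻¹ = 1 := by
  have hne : ∀ q, 1 - u q ≠ 0 := fun q => by linarith [hu q]
  have hm : Multipliable fun q => (1 - u q)⁻¹ := by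
    have h1 : Multipliable fun q => 1 + ((1 - u q)⁻¹ - 1) := by
      refine multipliable_one_add_of_summable (Summable.of_nonneg_of_le
        (fun _ => norm_nonneg _) (fun q => ?_) (hs.mul_left 2))
      have h2 : (1 - u q)⁻¹ - 1 = u q * (1 - u q)⁻¹ := by
        have := hne q
        field_simp
        ring
      have h3 : (1 - u q)⁻¹ ≤ 2 := by
        rw [inv_le_comm₀ (by linarith [hu q]) two_pos]
        linarith [hu q]
      have h4 : 0 ≤ (1 - u q)⁻¹ := inv_nonneg.2 (by linarith [hu q])
      rw [h2, Real.norm_of_nonneg (mul_nonneg (hu0 q) h4)]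
      nlinarith [hu0 q]
    simpa using h1
  have h5 := hL.mul hm.hasProd
  simp only [mul_inv_cancel₀ (hne _)] at h5
  exact h5.unique hasProd_one

end CappedCount

/-! ### Elements divisible by a fixed prime -/

/-- Under the counting axiom, the number of `h`-free elements `m` with `N(m) ≤ x` and
`n_𝔭(m) ≥ 1` equals `((N(𝔭)^{h−1} − 1)/(N(𝔭)^h − 1)) (κ/ζ_M(h)) x + O_h((x/N(𝔭))^τ)`,
with `τ < 1` independent of `𝔭`. -/
theorem hfree_count_divisible_by_prime {P : Type*} [Countable P]
    (N : P → ℕ) (hN : ∀ p, 1 < N p) (h : ℕ) (hh : 2 ≤ h)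
    (κ : ℝ) (hκ : 0 < κ) (θ : ℝ) (hθ0 : 0 ≤ θ) (hθ1 : θ < 1) (C : ℝ)
    (hcount : ∀ x : ℝ, 1 ≤ x →
      {m : P →₀ ℕ | (mnorm N m : ℝ) ≤ x}.Finite ∧
      |({m : P →₀ ℕ | (mnorm N m : ℝ) ≤ x}.ncard : ℝ) - κ * x| ≤ C * x ^ θ) :
    ∃ τ : ℝ, τ < 1 ∧ ∃ D : ℝ, ∀ 𝔭 : P, ∀ x : ℝ, 2 ≤ x →
      {m : P →₀ ℕ | (∀ p, m p ≤ h - 1) ∧ 1 ≤ m 𝔭 ∧ (mnorm N m : ℝ) ≤ x}.Finite ∧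
      |({m : P →₀ ℕ | (∀ p, m p ≤ h - 1) ∧ 1 ≤ m 𝔭 ∧ (mnorm N m : ℝ) ≤ x}.ncard : ℝ)
          - (((N 𝔭 : ℝ) ^ (h - 1) - 1) / ((N 𝔭 : ℝ) ^ h - 1))
            * (κ / (∏' p : P, (1 - ((N p : ℝ) ^ h)⁻¹)⁻¹)) * x|
        ≤ D * (x / (N 𝔭 : ℝ)) ^ τ := by
  classical
  have hfin := finite_of_counting fun x hx => (hcount x hx).1
  -- `τ ≥ 3/4` makes `h * τ ≥ 3/2`
  set τ : ℝ := max θ (3 / 4) with hτ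
  have hτ1 : τ < 1 := max_lt hθ1 (by norm_num)
  have hτ34 : 3 / 4 ≤ τ := le_max_right _ _
  set K : ℝ := |C| + κ with hK
  have hK0 : 0 ≤ K := by positivity
  have hT : ∀ x : ℝ, 0 < x → |(normCount N x : ℝ) - κ * x| ≤ K * x ^ τ := fun x hx =>
    abs_normCount_sub_le hN hκ (fun x hx => (hcount x hx).2) (le_max_left _ _) hτ1.le hx
  have hA : ∀ x : ℝ, 1 ≤ x → (normCount N x : ℝ) ≤ (κ + K) * x := by
    intro x hx
    have h1 := (abs_le.1 (hT x (by linarith))).2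
    have h2 : x ^ τ ≤ x ^ (1 : ℝ) := Real.rpow_le_rpow_of_exponent_le hx hτ1.le
    rw [Real.rpow_one] at h2
    nlinarith
  have hsum := summable_norm_rpow hN hfin hA
  set E : ℝ := ∑' q, (N q : ℝ) ^ (-(3 / 2) : ℝ) with hE
  have hN1 : ∀ q, (1 : ℝ) ≤ N q := fun q => by exact_mod_cast (hN q).le
  have hN0 : ∀ q, (0 : ℝ) < N q := fun q => lt_of_lt_of_le one_pos (hN1 q)
  have hnn : ∀ q, 0 ≤ (N q : ℝ) ^ (-(3 / 2) : ℝ) := fun q => Real.rpow_nonneg (hN0 q).le _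
  have hpow : ∀ q, ((N q : ℝ) ^ h) ^ (-τ) ≤ (N q : ℝ) ^ (-(3 / 2) : ℝ) := by
    intro q
    rw [← Real.rpow_natCast, ← Real.rpow_mul (hN0 q).le]
    refine Real.rpow_le_rpow_of_exponent_le (hN1 q) ?_
    have h2 : (2 : ℝ) ≤ h := by exact_mod_cast hh
    nlinarith
  have hsumU : ∀ U : Finset P, ∑ q ∈ U, (N q : ℝ) ^ (-(3 / 2) : ℝ) ≤ E := fun U =>
    hsum.sum_le_tsum _ fun q _ => hnn q
  -- the density `L = 1 / ζ_M(h)` of the `h`-free elements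
  obtain ⟨L, hL, -⟩ := abs_cappedCount_sub_le hN hfin hK0 hτ1.le hT (a := fun _ => h)
    (fun _ => by omega)
    (fun U => (Finset.sum_le_sum fun q _ => hpow q).trans (hsumU U))
  have hLZ : L * ∏' q, (1 - ((N q : ℝ) ^ h)⁻¹)⁻¹ = 1 := by
    refine mul_tprod_inv_eq_one (fun q => by have := hN0 q; positivity) (fun q => ?_) ?_ hL
    · rw [one_div]
      refine inv_anti₀ two_pos ?_
      have h2 : (2 : ℝ) ≤ N q := by exact_mod_cast hN q
      exact h2.trans (le_self_pow₀ (hN1 q) (by omega))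
    · refine Summable.of_nonneg_of_le (fun q => by have := hN0 q; positivity) (fun q => ?_) hsum
      refine le_trans ?_ (hpow q)
      rw [← Real.rpow_neg_one]
      exact Real.rpow_le_rpow_of_exponent_le (one_le_pow₀ (hN1 q)) (by linarith)
  refine ⟨τ, hτ1, K * Real.exp (1 + E), fun 𝔭 x hx => ⟨(hfin x).subset fun m hm => hm.2.2, ?_⟩⟩
  -- after division by `𝔭` the cap at `𝔭` drops by one
  set a : P → ℕ := fun q => if q = 𝔭 then h - 1 else h with ha
  have hB : ∀ U : Finset P, ∑ q ∈ U, ((N q : ℝ) ^ a q) ^ (-τ) ≤ 1 + E := by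
    intro U
    have h1 : ∀ q ∈ U, ((N q : ℝ) ^ a q) ^ (-τ)
        ≤ (if q = 𝔭 then 1 else 0) + (N q : ℝ) ^ (-(3 / 2) : ℝ) := by
      intro q _
      by_cases hq : q = 𝔭
      · have : ((N q : ℝ) ^ a q) ^ (-τ) ≤ 1 :=
          Real.rpow_le_one_of_one_le_of_nonpos (one_le_pow₀ (hN1 q)) (by linarith)
        rw [if_pos hq]
        linarith [hnn q]
      · simpa [ha, hq] using hpow q
    refine (Finset.sum_le_sum h1).trans ?_
    rw [Finset.sum_add_distrib]
    refine add_le_add ?_ (hsumU U)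
    rw [Finset.sum_ite_eq']
    split_ifs <;> norm_num
  obtain ⟨L', hL', hest⟩ := abs_cappedCount_sub_le hN hfin hK0 hτ1.le hT (a := a)
    (fun q => by simp only [ha]; split_ifs <;> omega) hB
  have hp := hN0 𝔭
  have hcard : {m : P →₀ ℕ | (∀ p, m p ≤ h - 1) ∧ 1 ≤ m 𝔭 ∧ (mnorm N m : ℝ) ≤ x}.ncard
      = cappedCount N a (x / N 𝔭) := by
    have h1 := ncard_multiples hN (Finsupp.single 𝔭 1) (fun m => ∀ p, m p ≤ h - 1) x
    rw [mnorm_single, pow_one] at h1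
    have h2 : {m : P →₀ ℕ | (∀ p, m p ≤ h - 1) ∧ 1 ≤ m 𝔭 ∧ (mnorm N m : ℝ) ≤ x}
        = {m : P →₀ ℕ | Finsupp.single 𝔭 1 ≤ m ∧ (∀ p, m p ≤ h - 1) ∧ (mnorm N m : ℝ) ≤ x} := by
      ext m
      simp only [Set.mem_ofPred_eq, Finsupp.single_le_iff]
      tauto
    rw [h2, h1, cappedCount]
    congr 1
    ext m
    simp only [Set.mem_ofPred_eq]
    refine and_congr_left fun _ => forall_congr' fun q => ?_
    by_cases hq : q = 𝔭
    · subst hq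
      simp only [ha, Finsupp.add_apply, Finsupp.single_eq_same, if_true]
      omega
    · simp only [ha, Finsupp.add_apply, Finsupp.single_eq_of_ne hq, if_neg hq]
      omega
  -- the two Euler products differ only in the factor at `𝔭`
  have hLL : L' * (1 - ((N 𝔭 : ℝ) ^ h)⁻¹) = L * (1 - ((N 𝔭 : ℝ) ^ (h - 1))⁻¹) := by
    have h1 := hL'.mul (hasProd_ite_eq 𝔭 (1 - ((N 𝔭 : ℝ) ^ h)⁻¹))
    have h2 := hL.mul (hasProd_ite_eq 𝔭 (1 - ((N 𝔭 : ℝ) ^ (h - 1))⁻¹))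
    refine h1.unique ?_
    convert h2 using 2 with q
    by_cases hq : q = 𝔭
    · subst hq
      simp only [ha, if_true]
      ring
    · simp only [ha, if_neg hq]
  have hmain : (((N 𝔭 : ℝ) ^ (h - 1) - 1) / ((N 𝔭 : ℝ) ^ h - 1))
      * (κ / (∏' p : P, (1 - ((N p : ℝ) ^ h)⁻¹)⁻¹)) * x = κ * L' * (x / N 𝔭) := by
    rw [div_eq_mul_inv κ, ← eq_inv_of_mul_eq_one_left hLZ]
    have h2 : (1 : ℝ) < (N 𝔭 : ℝ) ^ h :=
      one_lt_pow₀ (by exact_mod_cast hN 𝔭) (by omega)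
    have h3 : (N 𝔭 : ℝ) ^ h = N 𝔭 ^ (h - 1) * N 𝔭 := by
      rw [← pow_succ]; congr 1; omega
    have h4 : (0 : ℝ) < (N 𝔭 : ℝ) ^ (h - 1) := by positivity
    rw [h3] at hLL h2 ⊢
    set t := (N 𝔭 : ℝ) ^ (h - 1)
    have h5 : t * N 𝔭 - 1 ≠ 0 := by linarith
    have h6 : L' * (t * N 𝔭 - 1) = L * (t - 1) * N 𝔭 := by
      field_simp at hLL
      linarith
    have h7 : (t - 1) / (t * N 𝔭 - 1) * (κ * L) * x
        = κ * x * (L * (t - 1)) / (t * N 𝔭 - 1) := by ring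
    rw [h7, div_eq_iff h5, mul_comm _ (t * (N 𝔭 : ℝ) - 1)]
    field_simp
    linear_combination (-1 : ℝ) * h6
  rw [hcard, hmain]
  exact hest _ (div_pos (by linarith) hp)
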